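/- arXiv:1108.5415 — 2 statements merged into one kernel-verified Lean document; each statement's English description precedes it below -/
import Mathlib

section
/- Let x, y ∈ Δ_G and let (X_t, Y_t) be two copies of the Gibbs sampler on Δ_G started from X_0 = x and Y_0 = y and coupled under the proportional coupling. Then for every integer t ≥ 0, E[‖X_t − Y_t‖_2²] ≤ 4n·e^{−⌊tγ̂/8⌋}, where ‖X_t − Y_t‖_2² = ∑_{g∈G}(X_t[g] − Y_t[g])². -/
open MeasureTheory

noncomputable section

/-- Uniform probability measure on a finset. -/
def unifOn {α : Type*} [MeasurableSpace α] (s : Finset α) : Measure α :=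
  (s.card : ENNReal)⁻¹ • ∑ a ∈ s, Measure.dirac a

/-- Total variation distance between two measures. -/
def tvDist {α : Type*} [MeasurableSpace α] (μ ν : Measure α) : ℝ :=
  ⨆ A : {A : Set α // MeasurableSet A}, ((μ A).toReal - (ν A).toReal)

variable (G : Type*) [Group G] [Fintype G] [DecidableEq G] [MeasurableSpace G]
  [DiscreteMeasurableSpace G]

/-- The simplex of probability vectors indexed by `G`. -/
def simplexG : Set (G → ℝ) := {x | (∀ g, 0 ≤ x g) ∧ ∑ g, x g = 1}

/-- The uniform (normalized `(n-1)`-dimensional Hausdorff) measure on the simplex. -/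
def UG : Measure (G → ℝ) :=
  (μH[(Fintype.card G : ℝ) - 1] (simplexG G))⁻¹ •
    (μH[(Fintype.card G : ℝ) - 1]).restrict (simplexG G)

/-- One step of the Gibbs sampler on the simplex from update datum `(g, r, λ)`. -/
def gibbsStepG (x : G → ℝ) (u : G × G × ℝ) : G → ℝ := fun h =>
  if h = u.1 then u.2.2 * (x u.1 + x (u.1 * u.2.1))
  else if h = u.1 * u.2.1 then (1 - u.2.2) * (x u.1 + x (u.1 * u.2.1))
  else x h

/-- Law of the random update datum: `g` uniform on `G`, `r` uniform on `R`,
`λ` uniform on `[0,1]`. -/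
def driveG (R : Finset G) : Measure (G × G × ℝ) :=
  (unifOn (Finset.univ : Finset G)).prod
    ((unifOn R).prod ((volume : Measure ℝ).restrict (Set.Icc 0 1)))

/-- Law of the Gibbs sampler after `T` steps started at `x`. -/
def lawG (R : Finset G) (x : G → ℝ) (T : ℕ) : Measure (G → ℝ) :=
  Measure.map (fun ω : Fin T → G × G × ℝ => (List.ofFn ω).foldl (gibbsStepG G) x)
    (Measure.pi fun _ => driveG G R)

/-- The transition matrix of the slowed simple random walk on `G`. -/
def KhatM (R : Finset G) : G → G → ℝ := fun z w =>
  if z = w then 1 - 2 / (Fintype.card G : ℝ)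
  else if z⁻¹ * w ∈ R then 2 / ((Fintype.card G : ℝ) * R.card) else 0

/-- The spectral gap `γ̂ = 1 - λ̂₂` of `K̂`, with the second-largest eigenvalue
expressed by the variational (Courant–Fischer) characterization. -/
def gapHat (R : Finset G) : ℝ :=
  1 - sSup {lam : ℝ | ∃ v : G → ℝ, ∑ g, v g = 0 ∧ ∑ g, (v g) ^ 2 = 1 ∧
    lam = ∑ g, ∑ h, v g * KhatM G R g h * v h}

/-!
Let `d` be the difference of the two coupled copies; it evolves linearly. Although `E‖d‖²` does not
satisfy a closed recursion, the expected autocorrelation `C(w) = ∑ z, d(z) d(zw)` does, and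
`C(1) = ‖d‖²`. One step replaces `C` by `C - L f`, where `f` is the density of `C` for the weight
`1 + [w = 1]` and `L` is a symmetric operator: a mean over `r ∈ R` of the Laplacians of left and
right translation by `r`, up to a rank-one defect at `w = 1`. By Cauchy–Schwarz for the Laplacian
form against `δ₁`, the defect costs at most a third of that form. Left and right translations each
contribute the Dirichlet form of `K̂`, so the step has spectral gap at least `γ̂ / 3` on functions
of sum zero. Since it is moreover positive semidefinite, `C(1)` decays like `exp (-t γ̂ / 3)`.
-/

section Contraction

variable {K V : Type*} [Field K] [LinearOrder K] [IsStrictOrderedRing K] [AddCommGroup V]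
  [Module K V] {B : LinearMap.BilinForm K V} {T : Module.End K V}

lemma apply_map_self_le (hB : ∀ x, 0 ≤ B x x) (hT : LinearMap.IsSymm (B.compRight T))
    (hT_nonneg : ∀ x, 0 ≤ B x (T x)) {q : K} {x : V} (hx : B x (T x) ≤ q * B x x)
    (hTx : B (T x) (T (T x)) ≤ q * B (T x) (T x)) :
    B (T x) (T x) ≤ q ^ 2 * B x x := by
  have cauchy_schwarz : B (T x) (T x) ^ 2 ≤ B (T x) (T (T x)) * B x (T x) :=
    (B.compRight T).apply_sq_le_of_symm hT_nonneg hT (T x) x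
  have hmul : B (T x) (T x) ^ 2 ≤ (q * B (T x) (T x)) * (q * B x x) :=
    cauchy_schwarz.trans <| mul_le_mul hTx hx (hT_nonneg x) ((hT_nonneg _).trans hTx)
  rcases (hB (T x)).eq_or_lt with h0 | hpos
  · rw [← h0]
    exact mul_nonneg (sq_nonneg q) (hB x)
  · refine le_of_mul_le_mul_left ?_ hpos
    linarith

lemma apply_pow_self_le (hB : ∀ x, 0 ≤ B x x) (hT : LinearMap.IsSymm (B.compRight T))
    (hT_nonneg : ∀ x, 0 ≤ B x (T x)) {W : Set V} (hW : Set.MapsTo T W W) {q : K}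
    (hq : ∀ x ∈ W, B x (T x) ≤ q * B x x) {x : V} (hx : x ∈ W) (t : ℕ) :
    B ((T ^ t) x) ((T ^ t) x) ≤ (q ^ t) ^ 2 * B x x := by
  induction t generalizing x with
  | zero => simp
  | succ t ih =>
    calc B ((T ^ (t + 1)) x) ((T ^ (t + 1)) x) ≤ (q ^ t) ^ 2 * B (T x) (T x) := by
          simpa only [pow_succ, Module.End.mul_apply] using ih (hW hx)
      _ ≤ (q ^ t) ^ 2 * (q ^ 2 * B x x) := by
          gcongr
          exact apply_map_self_le hB hT hT_nonneg (hq x hx) (hq _ (hW hx))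
      _ = (q ^ (t + 1)) ^ 2 * B x x := by ring

end Contraction

section EdgeLaplacian

variable {Γ : Type*} [Group Γ]

/-- The sum of the Laplacians of left and of right translation by `r`: each of `r` and `r⁻¹` is
chosen with probability `1 / 2`. -/
def edgeLaplacian (r : Γ) : Module.End ℝ (Γ → ℝ) :=
  (2 : ℝ) • 1 - (1 / 2 : ℝ) •
    (LinearMap.funLeft ℝ ℝ (r * ·) + LinearMap.funLeft ℝ ℝ (r⁻¹ * ·) +
      LinearMap.funLeft ℝ ℝ (· * r) + LinearMap.funLeft ℝ ℝ (· * r⁻¹))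

lemma edgeLaplacian_apply (r : Γ) (F : Γ → ℝ) (w : Γ) :
    edgeLaplacian r F w =
      2 * F w - (F (r * w) + F (r⁻¹ * w) + F (w * r) + F (w * r⁻¹)) / 2 := by
  simp only [edgeLaplacian, LinearMap.sub_apply, LinearMap.smul_apply, Module.End.one_apply,
    LinearMap.add_apply, Pi.sub_apply, Pi.smul_apply, Pi.add_apply, LinearMap.funLeft_apply,
    smul_eq_mul]
  ring

lemma edgeLaplacian_apply_one (r : Γ) (F : Γ → ℝ) :
    edgeLaplacian r F 1 = 2 * F 1 - F r - F r⁻¹ := by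
  rw [edgeLaplacian_apply]
  simp only [mul_one, one_mul]
  ring

lemma edgeLaplacian_single_one [DecidableEq Γ] (r : Γ) :
    edgeLaplacian r (Pi.single 1 1) =
      (2 : ℝ) • Pi.single 1 1 - Pi.single r 1 - Pi.single r⁻¹ 1 := by
  ext w
  have left_mul (s : Γ) : s * w = 1 ↔ w = s⁻¹ := mul_eq_one_iff_eq_inv'
  have right_mul (s : Γ) : w * s = 1 ↔ w = s⁻¹ := mul_eq_one_iff_eq_inv
  simp only [edgeLaplacian_apply, Pi.sub_apply, Pi.smul_apply, Pi.single_apply, smul_eq_mul,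
    left_mul, right_mul, inv_inv]
  ring

lemma edgeLaplacian_single_one_apply_one [DecidableEq Γ] {r : Γ} (hr : r ≠ 1) :
    edgeLaplacian r (Pi.single 1 1) 1 = 2 := by
  rw [edgeLaplacian_single_one]
  simp [hr, hr.symm]

variable [Fintype Γ]

lemma sum_comp_mul_left {M : Type*} [AddCommMonoid M] (r : Γ) (F : Γ → M) :
    ∑ w, F (r * w) = ∑ w, F w :=
  Equiv.sum_comp (Equiv.mulLeft r) F

lemma sum_comp_mul_right {M : Type*} [AddCommMonoid M] (r : Γ) (F : Γ → M) :
    ∑ w, F (w * r) = ∑ w, F w :=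
  Equiv.sum_comp (Equiv.mulRight r) F

lemma sum_edgeLaplacian (r : Γ) (F : Γ → ℝ) : ∑ w, edgeLaplacian r F w = 0 := by
  simp only [edgeLaplacian_apply, Finset.sum_sub_distrib, ← Finset.sum_div, Finset.sum_add_distrib,
    ← Finset.mul_sum, sum_comp_mul_left, sum_comp_mul_right]
  ring

lemma dotProduct_edgeLaplacian (r : Γ) (H F : Γ → ℝ) :
    H ⬝ᵥ edgeLaplacian r F = (∑ w, (H w - H (r * w)) * (F w - F (r * w)) +
      ∑ w, (H w - H (w * r)) * (F w - F (w * r))) / 2 := by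
  have left_inv : ∑ w, H (r * w) * F w = ∑ w, H w * F (r⁻¹ * w) := by
    simpa using sum_comp_mul_left r fun w => H w * F (r⁻¹ * w)
  have right_inv : ∑ w, H (w * r) * F w = ∑ w, H w * F (w * r⁻¹) := by
    simpa using sum_comp_mul_right r fun w => H w * F (w * r⁻¹)
  simp only [dotProduct, edgeLaplacian_apply, mul_sub, sub_mul, mul_div_assoc', mul_add,
    mul_left_comm _ (2 : ℝ), Finset.sum_sub_distrib, ← Finset.sum_div, Finset.sum_add_distrib,
    ← Finset.mul_sum, sum_comp_mul_left r fun w => H w * F w,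
    sum_comp_mul_right r fun w => H w * F w, left_inv, right_inv]
  ring

lemma dotProduct_edgeLaplacian_comm (r : Γ) (F H : Γ → ℝ) :
    F ⬝ᵥ edgeLaplacian r H = H ⬝ᵥ edgeLaplacian r F := by
  simp only [dotProduct_edgeLaplacian, mul_comm]

lemma dotProduct_edgeLaplacian_self (r : Γ) (F : Γ → ℝ) :
    F ⬝ᵥ edgeLaplacian r F =
      (∑ w, (F w - F (r * w)) ^ 2 + ∑ w, (F w - F (w * r)) ^ 2) / 2 := by
  simp only [dotProduct_edgeLaplacian, sq]

lemma edgeLaplacian_apply_one_sq_le {r : Γ} (hr : r ≠ 1) (F : Γ → ℝ) :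
    edgeLaplacian r F 1 ^ 2 ≤ 2 * F ⬝ᵥ edgeLaplacian r F := by
  classical
  let form : LinearMap.BilinForm ℝ (Γ → ℝ) :=
    LinearMap.BilinForm.compRight (dotProductBilin ℝ ℝ) (edgeLaplacian r)
  have form_nonneg (H : Γ → ℝ) : 0 ≤ form H H := by
    change 0 ≤ H ⬝ᵥ edgeLaplacian r H
    rw [dotProduct_edgeLaplacian_self]
    positivity
  have form_symm : LinearMap.IsSymm form := ⟨fun H H' => dotProduct_edgeLaplacian_comm r H H'⟩
  have single_left (H : Γ → ℝ) : form (Pi.single 1 1) H = edgeLaplacian r H 1 :=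
    single_one_dotProduct 1 (edgeLaplacian r H)
  have cauchy_schwarz :=
    LinearMap.BilinForm.apply_sq_le_of_symm form form_nonneg form_symm (Pi.single 1 1) F
  rwa [single_left, single_left, edgeLaplacian_single_one_apply_one hr] at cauchy_schwarz

lemma dotProduct_edgeLaplacian_self_add_le {r : Γ} (hr : r ≠ 1) (F : Γ → ℝ) :
    F ⬝ᵥ edgeLaplacian r F + (F 1 + F r) ^ 2 + (F 1 + F r⁻¹) ^ 2 ≤ 4 * ∑ w, F w ^ 2 := by
  classical
  have parallelogram : F ⬝ᵥ edgeLaplacian r F +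
      (∑ w, (F w + F (r * w)) ^ 2 + ∑ w, (F w + F (w * r)) ^ 2) / 2 = 4 * ∑ w, F w ^ 2 := by
    simp only [dotProduct_edgeLaplacian_self, add_sq, sub_sq, Finset.sum_add_distrib,
      Finset.sum_sub_distrib, sum_comp_mul_left r fun w => F w ^ 2,
      sum_comp_mul_right r fun w => F w ^ 2]
    ring
  have pair_le (f : Γ → ℝ) (hf : ∀ w, 0 ≤ f w) : f 1 + f r⁻¹ ≤ ∑ w, f w := by
    rw [← Finset.sum_pair (inv_ne_one.2 hr).symm]
    exact Finset.sum_le_univ_sum_of_nonneg hf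
  have left_le := pair_le (fun w => (F w + F (r * w)) ^ 2) fun _ => sq_nonneg _
  have right_le := pair_le (fun w => (F w + F (w * r)) ^ 2) fun _ => sq_nonneg _
  simp only [mul_one, one_mul, mul_inv_cancel, inv_mul_cancel, add_comm (F r⁻¹)] at left_le right_le
  linarith

end EdgeLaplacian

section PairLaplacian

variable {Γ : Type*} [Group Γ] [DecidableEq Γ]

/-- The correction to `edgeLaplacian r` accounts for the pairs of sites which both lie on the
updated edge: there the update averages with weights `E[λ²] = 1 / 3` and `E[λ(1 - λ)] = 1 / 6`. -/
def pairLaplacian (r : Γ) : Module.End ℝ (Γ → ℝ) :=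
  edgeLaplacian r - (1 / 6 : ℝ) •
    (LinearMap.proj 1 ∘ₗ edgeLaplacian r).smulRight (edgeLaplacian r (Pi.single 1 1))

lemma pairLaplacian_apply (r : Γ) (F : Γ → ℝ) :
    pairLaplacian r F = edgeLaplacian r F -
      (edgeLaplacian r F 1 / 6) • edgeLaplacian r (Pi.single 1 1) := by
  ext w
  simp only [pairLaplacian, LinearMap.sub_apply, LinearMap.smul_apply, LinearMap.smulRight_apply,
    LinearMap.comp_apply, LinearMap.proj_apply, Pi.sub_apply, Pi.smul_apply, smul_eq_mul]
  ring

variable [Fintype Γ]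

lemma sum_pairLaplacian (r : Γ) (F : Γ → ℝ) : ∑ w, pairLaplacian r F w = 0 := by
  simp only [pairLaplacian_apply, Pi.sub_apply, Pi.smul_apply, Finset.sum_sub_distrib,
    ← Finset.smul_sum, sum_edgeLaplacian, smul_zero, sub_zero]

lemma dotProduct_pairLaplacian (r : Γ) (H F : Γ → ℝ) :
    H ⬝ᵥ pairLaplacian r F =
      H ⬝ᵥ edgeLaplacian r F - edgeLaplacian r H 1 * edgeLaplacian r F 1 / 6 := by
  rw [pairLaplacian_apply, dotProduct_sub, dotProduct_smul, dotProduct_edgeLaplacian_comm r H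
    (Pi.single 1 1), single_one_dotProduct, smul_eq_mul]
  ring

lemma dotProduct_pairLaplacian_comm (r : Γ) (F H : Γ → ℝ) :
    F ⬝ᵥ pairLaplacian r H = H ⬝ᵥ pairLaplacian r F := by
  rw [dotProduct_pairLaplacian, dotProduct_pairLaplacian, dotProduct_edgeLaplacian_comm,
    mul_comm (edgeLaplacian r F 1)]

lemma two_thirds_edgeLaplacian_le_pairLaplacian {r : Γ} (hr : r ≠ 1) (F : Γ → ℝ) :
    2 / 3 * F ⬝ᵥ edgeLaplacian r F ≤ F ⬝ᵥ pairLaplacian r F := by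
  rw [dotProduct_pairLaplacian]
  linarith [edgeLaplacian_apply_one_sq_le hr F]

-- The vertices `g` for which the edge `{g, g * r}` meets `{1, w}` are `1, r⁻¹, w, w * r⁻¹`.
lemma four_le_card_mul_add {r : Γ} (hr : r ≠ 1) (w : Γ) :
    4 ≤ Fintype.card Γ * (1 + if w = 1 then 1 else 0) + (if w = r then 1 else 0) +
      if w = r⁻¹ then 1 else 0 := by
  by_cases hw : w = 1
  · have two_le : 2 ≤ Fintype.card Γ := Fintype.one_lt_card_iff.2 ⟨r, 1, hr⟩
    simp only [hw, if_true]
    omega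
  · have card_pair : ({1, r⁻¹} : Finset Γ).card = 2 := Finset.card_pair (inv_ne_one.2 hr).symm
    have card_le : (insert (w * r⁻¹) (insert w {1, r⁻¹}) : Finset Γ).card ≤ Fintype.card Γ :=
      Finset.card_le_univ _
    simp only [Finset.card_insert_eq_ite, card_pair, Finset.mem_insert, Finset.mem_singleton,
      mul_eq_left, mul_eq_right, inv_eq_one, mul_inv_eq_one, hr, hw, false_or, or_false] at card_le
    split_ifs at card_le ⊢ <;> omega

lemma dotProduct_pairLaplacian_self_le {r : Γ} (hr : r ≠ 1) (F : Γ → ℝ) :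
    F ⬝ᵥ pairLaplacian r F ≤ Fintype.card Γ * (∑ w, F w ^ 2 + F 1 ^ 2) := by
  have upper : F ⬝ᵥ pairLaplacian r F + F r ^ 2 + F r⁻¹ ^ 2 ≤ 4 * ∑ w, F w ^ 2 := by
    rw [dotProduct_pairLaplacian, edgeLaplacian_apply_one]
    nlinarith [dotProduct_edgeLaplacian_self_add_le hr F, sq_nonneg (4 * F 1 + F r + F r⁻¹)]
  have count : 4 * ∑ w, F w ^ 2 ≤
      Fintype.card Γ * (∑ w, F w ^ 2 + F 1 ^ 2) + F r ^ 2 + F r⁻¹ ^ 2 := by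
    calc 4 * ∑ w, F w ^ 2 = ∑ w, 4 * F w ^ 2 := Finset.mul_sum ..
      _ ≤ ∑ w, (Fintype.card Γ * (1 + if w = 1 then 1 else 0) + (if w = r then 1 else 0) +
            if w = r⁻¹ then 1 else 0) * F w ^ 2 := by
          gcongr with w
          exact_mod_cast four_le_card_mul_add hr w
      _ = Fintype.card Γ * (∑ w, F w ^ 2 + F 1 ^ 2) + F r ^ 2 + F r⁻¹ ^ 2 := by
          simp only [mul_add, add_mul, mul_one, mul_ite, mul_zero, ite_mul, zero_mul, one_mul,
            Finset.sum_add_distrib, ← Finset.mul_sum, Finset.sum_ite_eq', Finset.mem_univ, if_true]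
  linarith

end PairLaplacian

section SpectralGap

variable {Γ : Type*} [Group Γ] [Fintype Γ]

/-- The Dirichlet form `⟨v, (1 - K̂) v⟩` of the slowed simple random walk. -/
def dirichletEnergy (R : Finset Γ) (v : Γ → ℝ) : ℝ :=
  ((Fintype.card Γ : ℝ) * R.card)⁻¹ * ∑ r ∈ R, ∑ w, (v w - v (w * r)) ^ 2

lemma dirichletEnergy_nonneg (R : Finset Γ) (v : Γ → ℝ) : 0 ≤ dirichletEnergy R v := by
  unfold dirichletEnergy
  positivity

lemma dirichletEnergy_sub_const (R : Finset Γ) (v : Γ → ℝ) (a : ℝ) :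
    dirichletEnergy R (fun w => v w - a) = dirichletEnergy R v := by
  simp only [dirichletEnergy, sub_sub_sub_cancel_right]

lemma dirichletEnergy_div_const (R : Finset Γ) (v : Γ → ℝ) (a : ℝ) :
    dirichletEnergy R (fun w => v w / a) = dirichletEnergy R v / a ^ 2 := by
  simp only [dirichletEnergy, ← sub_div, div_pow, ← Finset.sum_div, mul_div_assoc]

lemma dirichletEnergy_comp_inv (R : Finset Γ) (v : Γ → ℝ) :
    dirichletEnergy R (fun w => v w⁻¹) =
      ((Fintype.card Γ : ℝ) * R.card)⁻¹ * ∑ r ∈ R, ∑ w, (v w - v (r * w)) ^ 2 := by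
  unfold dirichletEnergy
  congr 1
  refine Finset.sum_congr rfl fun r _ => ?_
  rw [← Equiv.sum_comp ((Equiv.mulLeft r).trans (Equiv.inv Γ))]
  refine Finset.sum_congr rfl fun w _ => ?_
  simp only [Equiv.trans_apply, Equiv.coe_mulLeft, Equiv.inv_apply, mul_inv_rev, inv_inv,
    inv_mul_cancel_left]
  ring

variable [DecidableEq Γ]

lemma KhatM_eq_add_sum {R : Finset Γ} (hid : (1 : Γ) ∉ R) (g h : Γ) :
    KhatM Γ R g h = (if g = h then 1 - 2 / (Fintype.card Γ : ℝ) else 0) +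
      ∑ r ∈ R, if g * r = h then 2 / ((Fintype.card Γ : ℝ) * R.card) else 0 := by
  simp only [← eq_inv_mul_iff_mul_eq, Finset.sum_ite_eq', KhatM]
  by_cases hgh : g = h
  · simp [hgh, hid]
  · simp only [hgh, if_false, zero_add]

lemma sum_mul_KhatM_mul {R : Finset Γ} (hid : (1 : Γ) ∉ R) (hne : R.Nonempty) (v : Γ → ℝ) :
    ∑ g, ∑ h, v g * KhatM Γ R g h * v h = ∑ g, v g ^ 2 - dirichletEnergy R v := by
  have hn : (Fintype.card Γ : ℝ) ≠ 0 := Nat.cast_ne_zero.2 Fintype.card_ne_zero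
  have hm : (R.card : ℝ) ≠ 0 := Nat.cast_ne_zero.2 hne.card_ne_zero
  have row (g : Γ) : ∑ h, v g * KhatM Γ R g h * v h = (1 - 2 / (Fintype.card Γ : ℝ)) * v g ^ 2 +
      2 / ((Fintype.card Γ : ℝ) * R.card) * ∑ r ∈ R, v g * v (g * r) := by
    simp only [KhatM_eq_add_sum hid, mul_add, add_mul, Finset.sum_add_distrib, Finset.mul_sum,
      Finset.sum_mul]
    rw [Finset.sum_comm]
    simp only [mul_ite, mul_zero, ite_mul, zero_mul, Finset.sum_ite_eq, Finset.mem_univ, if_true]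
    congr 1
    · ring
    · exact Finset.sum_congr rfl fun r _ => by ring
  have energy : ∑ r ∈ R, ∑ w, (v w - v (w * r)) ^ 2 =
      2 * R.card * ∑ g, v g ^ 2 - 2 * ∑ r ∈ R, ∑ g, v g * v (g * r) := by
    simp only [sub_sq, Finset.sum_add_distrib, Finset.sum_sub_distrib, mul_assoc, ← Finset.mul_sum,
      sum_comp_mul_right _ fun w => v w ^ 2, Finset.sum_const, nsmul_eq_mul]
    ring
  rw [dirichletEnergy, energy, Finset.sum_comm (s := R)]
  simp only [row, Finset.sum_add_distrib, ← Finset.mul_sum]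
  field_simp
  ring

lemma sum_mul_KhatM_mul_le {R : Finset Γ} (hid : (1 : Γ) ∉ R) (hne : R.Nonempty) (v : Γ → ℝ) :
    ∑ g, ∑ h, v g * KhatM Γ R g h * v h ≤ ∑ g, v g ^ 2 := by
  rw [sum_mul_KhatM_mul hid hne]
  exact sub_le_self _ (dirichletEnergy_nonneg R v)

lemma gapHat_nonneg {R : Finset Γ} (hid : (1 : Γ) ∉ R) (hne : R.Nonempty) : 0 ≤ gapHat Γ R := by
  refine sub_nonneg.2 (Real.sSup_le ?_ zero_le_one)
  rintro _ ⟨v, -, hv, rfl⟩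
  exact (sum_mul_KhatM_mul_le hid hne v).trans_eq hv

lemma gapHat_le_dirichletEnergy {R : Finset Γ} (hid : (1 : Γ) ∉ R) (hne : R.Nonempty) {v : Γ → ℝ}
    (hv : ∑ g, v g = 0) (hv_sq : ∑ g, v g ^ 2 = 1) : gapHat Γ R ≤ dirichletEnergy R v := by
  have bddAbove : BddAbove {lam : ℝ | ∃ v : Γ → ℝ, ∑ g, v g = 0 ∧ ∑ g, (v g) ^ 2 = 1 ∧
      lam = ∑ g, ∑ h, v g * KhatM Γ R g h * v h} := by
    refine ⟨1, ?_⟩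
    rintro _ ⟨u, -, hu, rfl⟩
    exact (sum_mul_KhatM_mul_le hid hne u).trans_eq hu
  have le_sSup := le_csSup bddAbove ⟨v, hv, hv_sq, rfl⟩
  rw [sum_mul_KhatM_mul hid hne, hv_sq] at le_sSup
  unfold gapHat
  linarith

lemma gapHat_mul_le_dirichletEnergy {R : Finset Γ} (hid : (1 : Γ) ∉ R) (hne : R.Nonempty)
    {v : Γ → ℝ} (hv : ∑ g, v g = 0) :
    gapHat Γ R * ∑ g, v g ^ 2 ≤ dirichletEnergy R v := by
  have sum_sq_nonneg : 0 ≤ ∑ g, v g ^ 2 := Finset.sum_nonneg fun g _ => sq_nonneg (v g)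
  rcases sum_sq_nonneg.eq_or_lt with hzero | hpos
  · rw [← hzero, mul_zero]
    exact dirichletEnergy_nonneg R v
  · have normalized := gapHat_le_dirichletEnergy hid hne (v := fun g => v g / √(∑ g, v g ^ 2))
      (by rw [← Finset.sum_div, hv, zero_div])
      (by simp only [div_pow, ← Finset.sum_div, Real.sq_sqrt sum_sq_nonneg, div_self hpos.ne'])
    rwa [dirichletEnergy_div_const, Real.sq_sqrt sum_sq_nonneg, le_div_iff₀ hpos] at normalized

lemma gapHat_mul_variance_le_dirichletEnergy {R : Finset Γ} (hid : (1 : Γ) ∉ R) (hne : R.Nonempty)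
    (v : Γ → ℝ) :
    gapHat Γ R * ∑ g, (v g - (∑ h, v h) / Fintype.card Γ) ^ 2 ≤ dirichletEnergy R v := by
  rw [← dirichletEnergy_sub_const R v ((∑ h, v h) / Fintype.card Γ)]
  refine gapHat_mul_le_dirichletEnergy hid hne ?_
  rw [Finset.sum_sub_distrib, Finset.sum_const, Finset.card_univ, nsmul_eq_mul,
    mul_div_cancel₀ _ (Nat.cast_ne_zero.2 Fintype.card_ne_zero), sub_self]

end SpectralGap

section MeanPairLaplacian

variable {Γ : Type*} [Group Γ] [Fintype Γ] [DecidableEq Γ]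

/-- The average of `pairLaplacian r` over `r ∈ R`, divided by `|Γ|` for the uniform choice of the
updated vertex. -/
def meanPairLaplacian (R : Finset Γ) : Module.End ℝ (Γ → ℝ) :=
  ((Fintype.card Γ : ℝ) * R.card)⁻¹ • ∑ r ∈ R, pairLaplacian r

lemma meanPairLaplacian_apply (R : Finset Γ) (F : Γ → ℝ) :
    meanPairLaplacian R F =
      ((Fintype.card Γ : ℝ) * R.card)⁻¹ • ∑ r ∈ R, pairLaplacian r F := by
  rw [meanPairLaplacian, LinearMap.smul_apply, LinearMap.sum_apply]

lemma sum_meanPairLaplacian (R : Finset Γ) (F : Γ → ℝ) : ∑ w, meanPairLaplacian R F w = 0 := by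
  simp only [meanPairLaplacian_apply, Pi.smul_apply, Finset.sum_apply, ← Finset.smul_sum]
  rw [Finset.sum_comm]
  simp only [sum_pairLaplacian, Finset.sum_const_zero, smul_zero]

lemma dotProduct_meanPairLaplacian (R : Finset Γ) (H F : Γ → ℝ) :
    H ⬝ᵥ meanPairLaplacian R F =
      ((Fintype.card Γ : ℝ) * R.card)⁻¹ * ∑ r ∈ R, H ⬝ᵥ pairLaplacian r F := by
  rw [meanPairLaplacian_apply, dotProduct_smul, dotProduct_sum, smul_eq_mul]

lemma dotProduct_meanPairLaplacian_comm (R : Finset Γ) (F H : Γ → ℝ) :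
    F ⬝ᵥ meanPairLaplacian R H = H ⬝ᵥ meanPairLaplacian R F := by
  simp only [dotProduct_meanPairLaplacian, dotProduct_pairLaplacian_comm _ F H]

lemma dotProduct_meanPairLaplacian_self_le {R : Finset Γ} (hid : (1 : Γ) ∉ R) (hne : R.Nonempty)
    (F : Γ → ℝ) : F ⬝ᵥ meanPairLaplacian R F ≤ ∑ w, F w ^ 2 + F 1 ^ 2 := by
  have hn : (Fintype.card Γ : ℝ) ≠ 0 := Nat.cast_ne_zero.2 Fintype.card_ne_zero
  have hm : (R.card : ℝ) ≠ 0 := Nat.cast_ne_zero.2 hne.card_ne_zero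
  calc F ⬝ᵥ meanPairLaplacian R F
      = ((Fintype.card Γ : ℝ) * R.card)⁻¹ * ∑ r ∈ R, F ⬝ᵥ pairLaplacian r F :=
        dotProduct_meanPairLaplacian R F F
    _ ≤ ((Fintype.card Γ : ℝ) * R.card)⁻¹ *
          ∑ r ∈ R, Fintype.card Γ * (∑ w, F w ^ 2 + F 1 ^ 2) := by
        gcongr with r hr
        exact dotProduct_pairLaplacian_self_le (ne_of_mem_of_not_mem hr hid) F
    _ = ∑ w, F w ^ 2 + F 1 ^ 2 := by
        rw [Finset.sum_const, nsmul_eq_mul]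
        field_simp

lemma dirichletEnergy_add_le_dotProduct_meanPairLaplacian {R : Finset Γ} (hid : (1 : Γ) ∉ R)
    (F : Γ → ℝ) : (dirichletEnergy R F + dirichletEnergy R fun w => F w⁻¹) / 3 ≤
      F ⬝ᵥ meanPairLaplacian R F := by
  calc (dirichletEnergy R F + dirichletEnergy R fun w => F w⁻¹) / 3
      = ((Fintype.card Γ : ℝ) * R.card)⁻¹ * ∑ r ∈ R, 2 / 3 * F ⬝ᵥ edgeLaplacian r F := by
        rw [dirichletEnergy_comp_inv, dirichletEnergy]
        simp only [dotProduct_edgeLaplacian_self, ← Finset.mul_sum, ← Finset.sum_div,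
          Finset.sum_add_distrib]
        ring
    _ ≤ ((Fintype.card Γ : ℝ) * R.card)⁻¹ * ∑ r ∈ R, F ⬝ᵥ pairLaplacian r F := by
        gcongr with r hr
        exact two_thirds_edgeLaplacian_le_pairLaplacian (ne_of_mem_of_not_mem hr hid) F
    _ = F ⬝ᵥ meanPairLaplacian R F := (dotProduct_meanPairLaplacian R F F).symm

lemma gapHat_mul_variance_le_dotProduct_meanPairLaplacian {R : Finset Γ} (hid : (1 : Γ) ∉ R)
    (hne : R.Nonempty) (F : Γ → ℝ) :
    2 / 3 * (gapHat Γ R * ∑ w, (F w - (∑ h, F h) / Fintype.card Γ) ^ 2) ≤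
      F ⬝ᵥ meanPairLaplacian R F := by
  have right := gapHat_mul_variance_le_dirichletEnergy hid hne F
  have left := gapHat_mul_variance_le_dirichletEnergy hid hne fun w => F w⁻¹
  have sum_inv (f : Γ → ℝ) : ∑ w, f w⁻¹ = ∑ w, f w := Equiv.sum_comp (Equiv.inv Γ) f
  rw [sum_inv F, sum_inv fun w => (F w - (∑ h, F h) / Fintype.card Γ) ^ 2] at left
  linarith [dirichletEnergy_add_le_dotProduct_meanPairLaplacian hid F]

end MeanPairLaplacian

section CorrStep

variable {Γ : Type*} [Group Γ] [DecidableEq Γ]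

/-- The density of `C` with respect to the weight `1 + [w = 1]`, which is invariant under the
expected evolution `corrStep` of autocorrelations. -/
def corrDensity : Module.End ℝ (Γ → ℝ) :=
  1 - (1 / 2 : ℝ) • (LinearMap.proj 1).smulRight (Pi.single 1 1)

lemma corrDensity_apply (C : Γ → ℝ) : corrDensity C = C - (C 1 / 2) • Pi.single 1 1 := by
  ext w
  simp only [corrDensity, LinearMap.sub_apply, LinearMap.smul_apply, LinearMap.smulRight_apply,
    LinearMap.proj_apply, Module.End.one_apply, Pi.sub_apply, Pi.smul_apply, smul_eq_mul]
  ring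

lemma corrDensity_apply_one (C : Γ → ℝ) : corrDensity C 1 = C 1 / 2 := by
  simp only [corrDensity_apply, Pi.sub_apply, Pi.smul_apply, Pi.single_eq_same, smul_eq_mul]
  ring

lemma pairLaplacian_corrDensity {r : Γ} (hr : r ≠ 1) (C : Γ → ℝ) :
    pairLaplacian r (corrDensity C) = edgeLaplacian r C -
      ((4 * C 1 - C r - C r⁻¹) / 6) • edgeLaplacian r (Pi.single 1 1) := by
  rw [pairLaplacian_apply, corrDensity_apply, map_sub, map_smul, Pi.sub_apply, Pi.smul_apply,
    edgeLaplacian_single_one_apply_one hr, edgeLaplacian_apply_one, smul_eq_mul]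
  module

variable [Fintype Γ]

lemma corrDensity_dotProduct (C H : Γ → ℝ) : corrDensity C ⬝ᵥ H = C ⬝ᵥ H - C 1 * H 1 / 2 := by
  rw [corrDensity_apply, sub_dotProduct, smul_dotProduct, single_one_dotProduct, smul_eq_mul]
  ring

lemma sum_corrDensity (C : Γ → ℝ) : ∑ w, corrDensity C w = ∑ w, C w - C 1 / 2 := by
  rw [← dotProduct_one, corrDensity_dotProduct, dotProduct_one, Pi.one_apply, mul_one]

lemma dotProduct_corrDensity (C H : Γ → ℝ) : C ⬝ᵥ corrDensity H = C ⬝ᵥ H - C 1 * H 1 / 2 := by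
  rw [dotProduct_comm, corrDensity_dotProduct, dotProduct_comm, mul_comm (H 1)]

/-- The inner product on autocorrelations for which their expected evolution is self-adjoint. -/
def corrForm : LinearMap.BilinForm ℝ (Γ → ℝ) :=
  LinearMap.BilinForm.compRight (dotProductBilin ℝ ℝ) corrDensity

lemma corrForm_apply (C H : Γ → ℝ) : corrForm C H = C ⬝ᵥ H - C 1 * H 1 / 2 :=
  dotProduct_corrDensity C H

lemma corrForm_self (C : Γ → ℝ) : corrForm C C = ∑ w, C w ^ 2 - C 1 ^ 2 / 2 := by
  simp only [corrForm_apply, dotProduct, sq]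

lemma corrForm_self_eq_sum_corrDensity_sq (C : Γ → ℝ) :
    corrForm C C = ∑ w, corrDensity C w ^ 2 + corrDensity C 1 ^ 2 := by
  have dotProduct_self : corrDensity C ⬝ᵥ corrDensity C = ∑ w, corrDensity C w ^ 2 := by
    simp only [dotProduct, sq]
  rw [← dotProduct_self, corrDensity_dotProduct, dotProduct_corrDensity, corrForm_apply,
    corrDensity_apply_one]
  ring

lemma apply_one_sq_le_corrForm_self (C : Γ → ℝ) : C 1 ^ 2 ≤ 2 * corrForm C C := by
  have sq_le_sum : C 1 ^ 2 ≤ ∑ w, C w ^ 2 :=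
    Finset.single_le_sum (f := fun w => C w ^ 2) (fun w _ => sq_nonneg _) (Finset.mem_univ 1)
  rw [corrForm_self]
  linarith

lemma corrForm_self_nonneg (C : Γ → ℝ) : 0 ≤ corrForm C C := by
  linarith [apply_one_sq_le_corrForm_self C, sq_nonneg (C 1)]

lemma corrForm_self_le (C : Γ → ℝ) : corrForm C C ≤ ∑ w, C w ^ 2 := by
  rw [corrForm_self]
  linarith [sq_nonneg (C 1)]

-- Under the weight `1 + [w = 1]` the density of `C` has mean zero, so subtracting `a` only
-- increases its weighted sum of squares; and the weight is at most `2`.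
lemma corrForm_self_le_two_mul_sum_sub_sq {C : Γ → ℝ} (hC : ∑ w, C w = 0) (a : ℝ) :
    corrForm C C ≤ 2 * ∑ w, (corrDensity C w - a) ^ 2 := by
  have expand : ∑ w, (corrDensity C w - a) ^ 2 = ∑ w, corrDensity C w ^ 2 -
      2 * a * ∑ w, corrDensity C w + Fintype.card Γ * a ^ 2 := by
    simp only [sub_sq, Finset.sum_add_distrib, Finset.sum_sub_distrib, mul_right_comm _ _ a,
      ← Finset.mul_sum, Finset.sum_const, Finset.card_univ, nsmul_eq_mul]
  have one_le : (corrDensity C 1 - a) ^ 2 ≤ ∑ w, (corrDensity C w - a) ^ 2 :=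
    Finset.single_le_sum (f := fun w => (corrDensity C w - a) ^ 2) (fun w _ => sq_nonneg _)
      (Finset.mem_univ 1)
  have card_nonneg : 0 ≤ (Fintype.card Γ + 1) * a ^ 2 := by positivity
  rw [sum_corrDensity, hC, ← corrDensity_apply_one] at expand
  rw [corrForm_self_eq_sum_corrDensity_sq]
  linarith

/-- The expected evolution, under one step of the sampler, of the autocorrelation of the
difference of two coupled copies. -/
def corrStep (R : Finset Γ) : Module.End ℝ (Γ → ℝ) := 1 - meanPairLaplacian R * corrDensity

lemma corrStep_apply (R : Finset Γ) (C : Γ → ℝ) :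
    corrStep R C = C - meanPairLaplacian R (corrDensity C) := rfl

lemma sum_corrStep (R : Finset Γ) (C : Γ → ℝ) : ∑ w, corrStep R C w = ∑ w, C w := by
  simp only [corrStep_apply, Pi.sub_apply, Finset.sum_sub_distrib, sum_meanPairLaplacian, sub_zero]

lemma corrForm_corrStep (R : Finset Γ) (C H : Γ → ℝ) :
    corrForm C (corrStep R H) =
      corrForm C H - corrDensity C ⬝ᵥ meanPairLaplacian R (corrDensity H) := by
  rw [corrStep_apply, map_sub, corrForm_apply C (meanPairLaplacian R _), corrDensity_dotProduct]

lemma corrForm_compRight_corrStep_isSymm (R : Finset Γ) :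
    LinearMap.IsSymm (corrForm.compRight (corrStep R)) := by
  refine ⟨fun C H => ?_⟩
  change corrForm C (corrStep R H) = corrForm H (corrStep R C)
  rw [corrForm_corrStep, corrForm_corrStep, dotProduct_meanPairLaplacian_comm, corrForm_apply,
    corrForm_apply, dotProduct_comm, mul_comm (C 1)]

lemma corrForm_corrStep_self_nonneg {R : Finset Γ} (hid : (1 : Γ) ∉ R) (hne : R.Nonempty)
    (C : Γ → ℝ) : 0 ≤ corrForm C (corrStep R C) := by
  rw [corrForm_corrStep, sub_nonneg, corrForm_self_eq_sum_corrDensity_sq]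
  exact dotProduct_meanPairLaplacian_self_le hid hne _

lemma corrForm_corrStep_self_le {R : Finset Γ} (hid : (1 : Γ) ∉ R) (hne : R.Nonempty)
    {C : Γ → ℝ} (hC : ∑ w, C w = 0) :
    corrForm C (corrStep R C) ≤ Real.exp (-(gapHat Γ R / 3)) * corrForm C C := by
  have le_variance := mul_le_mul_of_nonneg_left (corrForm_self_le_two_mul_sum_sub_sq hC
    ((∑ w, corrDensity C w) / Fintype.card Γ)) (gapHat_nonneg hid hne)
  calc corrForm C (corrStep R C) ≤ (-(gapHat Γ R / 3) + 1) * corrForm C C := by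
        rw [corrForm_corrStep]
        linarith [gapHat_mul_variance_le_dotProduct_meanPairLaplacian hid hne (corrDensity C)]
    _ ≤ Real.exp (-(gapHat Γ R / 3)) * corrForm C C :=
        mul_le_mul_of_nonneg_right (Real.add_one_le_exp _) (corrForm_self_nonneg C)

lemma corrStep_pow_apply_one_le {R : Finset Γ} (hid : (1 : Γ) ∉ R) (hne : R.Nonempty)
    {C : Γ → ℝ} (hC : ∑ w, C w = 0) (t : ℕ) :
    (corrStep R ^ t) C 1 ≤ Real.exp (-(t * gapHat Γ R / 3)) * √(2 * ∑ w, C w ^ 2) := by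
  have decay : corrForm ((corrStep R ^ t) C) ((corrStep R ^ t) C) ≤
      (Real.exp (-(gapHat Γ R / 3)) ^ t) ^ 2 * corrForm C C :=
    apply_pow_self_le corrForm_self_nonneg (corrForm_compRight_corrStep_isSymm R)
      (corrForm_corrStep_self_nonneg hid hne) (W := {H | ∑ w, H w = 0})
      (fun H hH => (sum_corrStep R H).trans hH)
      (fun H hH => corrForm_corrStep_self_le hid hne hH) hC t
  have exp_pow : Real.exp (-(gapHat Γ R / 3)) ^ t = Real.exp (-(t * gapHat Γ R / 3)) := by
    rw [← Real.exp_nat_mul]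
    ring_nf
  rw [exp_pow] at decay
  refine le_of_abs_le (abs_le_of_sq_le_sq ?_ (by positivity))
  calc (corrStep R ^ t) C 1 ^ 2
      ≤ 2 * corrForm ((corrStep R ^ t) C) ((corrStep R ^ t) C) := apply_one_sq_le_corrForm_self _
    _ ≤ 2 * (Real.exp (-(t * gapHat Γ R / 3)) ^ 2 * ∑ w, C w ^ 2) := by
        gcongr
        exact decay.trans (mul_le_mul_of_nonneg_left (corrForm_self_le C) (sq_nonneg _))
    _ = (Real.exp (-(t * gapHat Γ R / 3)) * √(2 * ∑ w, C w ^ 2)) ^ 2 := by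
        rw [mul_pow, Real.sq_sqrt (by positivity)]
        ring

end CorrStep

section Correlation

variable {Γ : Type*} [Group Γ] [Fintype Γ]

/-- The cross-correlation of two functions on the group, as a bilinear map; with both arguments
equal it is the autocorrelation, through which the difference of two coupled copies is tracked. -/
def correlation : (Γ → ℝ) →ₗ[ℝ] (Γ → ℝ) →ₗ[ℝ] (Γ → ℝ) :=
  LinearMap.mk₂ ℝ (fun d e w => ∑ z, d z * e (z * w))
    (fun d d' e => by
      ext w
      simp only [Pi.add_apply, add_mul, Finset.sum_add_distrib])
    (fun c d e => by
      ext w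
      simp only [Pi.smul_apply, smul_eq_mul, Finset.mul_sum, mul_assoc])
    (fun d e e' => by
      ext w
      simp only [Pi.add_apply, mul_add, Finset.sum_add_distrib])
    (fun c d e => by
      ext w
      simp only [Pi.smul_apply, smul_eq_mul, Finset.mul_sum, mul_left_comm])

lemma correlation_apply (d e : Γ → ℝ) (w : Γ) : correlation d e w = ∑ z, d z * e (z * w) := rfl

lemma correlation_self_one (d : Γ → ℝ) : correlation d d 1 = ∑ z, d z ^ 2 := by
  simp only [correlation_apply, mul_one, sq]

lemma sum_mul_comp_mul_right (d e : Γ → ℝ) (a b : Γ) :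
    ∑ g, d (g * a) * e (g * b) = correlation d e (a⁻¹ * b) := by
  simpa only [mul_assoc, mul_inv_cancel_left, correlation_apply] using
    sum_comp_mul_right a fun g => d g * e (g * (a⁻¹ * b))

lemma correlation_inv (d e : Γ → ℝ) (w : Γ) : correlation d e w⁻¹ = correlation e d w := by
  rw [← mul_one w⁻¹, ← sum_mul_comp_mul_right, correlation_apply]
  simp only [mul_one, mul_comm]

lemma sum_correlation (d e : Γ → ℝ) : ∑ w, correlation d e w = (∑ z, d z) * ∑ z, e z := by
  simp only [correlation_apply]
  rw [Finset.sum_comm]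
  simp only [← Finset.mul_sum, sum_comp_mul_left, ← Finset.sum_mul]

lemma correlation_self_sq_le (d : Γ → ℝ) (w : Γ) :
    correlation d d w ^ 2 ≤ (∑ z, d z ^ 2) ^ 2 := by
  calc correlation d d w ^ 2 ≤ (∑ z, d z ^ 2) * ∑ z, d (z * w) ^ 2 :=
        Finset.sum_mul_sq_le_sq_mul_sq Finset.univ d fun z => d (z * w)
    _ = (∑ z, d z ^ 2) ^ 2 := by rw [sum_comp_mul_right w fun z => d z ^ 2, sq]

variable [DecidableEq Γ]

lemma correlation_single_left (g : Γ) (e : Γ → ℝ) (w : Γ) :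
    correlation (Pi.single g 1) e w = e (g * w) :=
  single_one_dotProduct g fun z => e (z * w)

end Correlation

section GibbsStep

variable {Γ : Type*} [Group Γ] [DecidableEq Γ]

lemma gibbsStepG_sub (x y : Γ → ℝ) (u : Γ × Γ × ℝ) :
    gibbsStepG Γ (x - y) u = gibbsStepG Γ x u - gibbsStepG Γ y u := by
  ext h
  simp only [gibbsStepG, Pi.sub_apply]
  split_ifs <;> ring

lemma foldl_gibbsStepG_sub (us : List (Γ × Γ × ℝ)) (x y : Γ → ℝ) :
    us.foldl (gibbsStepG Γ) (x - y) = us.foldl (gibbsStepG Γ) x - us.foldl (gibbsStepG Γ) y := by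
  induction us generalizing x y with
  | nil => rfl
  | cons u us ih => rw [List.foldl_cons, gibbsStepG_sub, ih, List.foldl_cons, List.foldl_cons]

lemma continuous_gibbsStepG (d : Γ → ℝ) (g r : Γ) :
    Continuous fun l => gibbsStepG Γ d (g, r, l) := by
  refine continuous_pi fun z => ?_
  dsimp only [gibbsStepG]
  split_ifs <;> fun_prop

lemma measurable_gibbsStepG [Countable Γ] [MeasurableSpace Γ] [MeasurableSingletonClass Γ] :
    Measurable fun p : (Γ → ℝ) × (Γ × Γ × ℝ) => gibbsStepG Γ p.1 p.2 := by
  have measurable_swapped : Measurable fun q : (Γ × Γ) × ((Γ → ℝ) × ℝ) =>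
      gibbsStepG Γ q.2.1 (q.1.1, q.1.2, q.2.2) := by
    refine measurable_from_prod_countable_right fun e => measurable_pi_iff.2 fun z => ?_
    dsimp only [gibbsStepG]
    split_ifs <;> fun_prop
  exact measurable_swapped.comp
    (f := fun p : (Γ → ℝ) × (Γ × Γ × ℝ) => ((p.2.1, p.2.2.1), (p.1, p.2.2.2))) (by fun_prop)

/-- The signed indicator `δ_g - δ_{gr}` of the edge `{g, g * r}`, along which a step moves. -/
def edgeVector (g r : Γ) : Γ → ℝ := Pi.single g 1 - Pi.single (g * r) 1

lemma gibbsStepG_eq_add_smul (d : Γ → ℝ) (g : Γ) {r : Γ} (hr : r ≠ 1) (l : ℝ) :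
    gibbsStepG Γ d (g, r, l) = d + (l * (d g + d (g * r)) - d g) • edgeVector g r := by
  ext h
  simp only [gibbsStepG, edgeVector, Pi.add_apply, Pi.smul_apply, Pi.sub_apply, Pi.single_apply,
    smul_eq_mul]
  by_cases hg : h = g
  · simp [hg, hr]
  · by_cases hgr : h = g * r
    · simp only [hgr, mul_eq_left, hr, if_false, if_true, zero_sub, mul_neg, mul_one, neg_sub]
      ring
    · simp [hg, hgr]

variable [Fintype Γ]

lemma edgeVector_correlation (g r : Γ) (d : Γ → ℝ) (w : Γ) :
    correlation (edgeVector g r) d w = d (g * w) - d (g * (r * w)) := by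
  simp only [edgeVector, map_sub, LinearMap.sub_apply, Pi.sub_apply, correlation_single_left,
    mul_assoc]

lemma correlation_edgeVector (g r : Γ) (d : Γ → ℝ) (w : Γ) :
    correlation d (edgeVector g r) w = d (g * w⁻¹) - d (g * (r * w⁻¹)) := by
  rw [← inv_inv w, correlation_inv, edgeVector_correlation, inv_inv]

lemma correlation_edgeVector_self (g r : Γ) :
    correlation (edgeVector g r) (edgeVector g r) = edgeLaplacian r (Pi.single 1 1) := by
  ext w
  rw [edgeVector_correlation, edgeLaplacian_single_one]
  simp only [edgeVector, Pi.sub_apply, Pi.smul_apply, Pi.single_apply, smul_eq_mul, mul_eq_left,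
    mul_right_inj, mul_eq_one_iff_eq_inv']
  ring

lemma correlation_gibbsStepG_self (d : Γ → ℝ) (g : Γ) {r : Γ} (hr : r ≠ 1) (l : ℝ) :
    correlation (gibbsStepG Γ d (g, r, l)) (gibbsStepG Γ d (g, r, l)) = correlation d d +
      (l * (d g + d (g * r)) - d g) •
        (correlation d (edgeVector g r) + correlation (edgeVector g r) d) +
      (l * (d g + d (g * r)) - d g) ^ 2 • edgeLaplacian r (Pi.single 1 1) := by
  rw [gibbsStepG_eq_add_smul d g hr, ← correlation_edgeVector_self g r]
  simp only [map_add, map_smul, LinearMap.add_apply, LinearMap.smul_apply]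
  module

lemma continuous_correlation_gibbsStepG_self (d : Γ → ℝ) (g r : Γ) :
    Continuous fun l => correlation (gibbsStepG Γ d (g, r, l)) (gibbsStepG Γ d (g, r, l)) := by
  have coordinate (z : Γ) : Continuous fun l => gibbsStepG Γ d (g, r, l) z :=
    (continuous_apply z).comp (continuous_gibbsStepG d g r)
  simp only [continuous_pi_iff, correlation_apply]
  fun_prop

lemma integral_correlation_gibbsStepG_self (d : Γ → ℝ) (g : Γ) {r : Γ} (hr : r ≠ 1) :
    ∫ l in (0 : ℝ)..1, correlation (gibbsStepG Γ d (g, r, l)) (gibbsStepG Γ d (g, r, l)) =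
      correlation d d + ((d (g * r) - d g) / 2) •
        (correlation d (edgeVector g r) + correlation (edgeVector g r) d) +
      ((d g ^ 2 - d g * d (g * r) + d (g * r) ^ 2) / 3) • edgeLaplacian r (Pi.single 1 1) := by
  have first_moment (a b : ℝ) : ∫ l in (0 : ℝ)..1, (l * (a + b) - a) = (b - a) / 2 := by
    rw [intervalIntegral.integral_sub (by simp) (by simp), intervalIntegral.integral_mul_const,
      integral_id, intervalIntegral.integral_const, smul_eq_mul]
    ring
  have second_moment (a b : ℝ) :
      ∫ l in (0 : ℝ)..1, (l * (a + b) - a) ^ 2 = (a ^ 2 - a * b + b ^ 2) / 3 := by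
    have expand (l : ℝ) : (l * (a + b) - a) ^ 2 =
        l ^ 2 * (a + b) ^ 2 - l * (2 * a * (a + b)) + a ^ 2 := by ring
    simp only [expand]
    rw [intervalIntegral.integral_add (Continuous.intervalIntegrable (by fun_prop) 0 1) (by simp),
      intervalIntegral.integral_sub (by simp) (by simp), intervalIntegral.integral_mul_const,
      intervalIntegral.integral_mul_const, integral_id, integral_pow,
      intervalIntegral.integral_const, smul_eq_mul]
    ring
  simp only [correlation_gibbsStepG_self d g hr]
  rw [intervalIntegral.integral_add, intervalIntegral.integral_add,
    intervalIntegral.integral_smul_const, intervalIntegral.integral_smul_const,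
    intervalIntegral.integral_const, first_moment, second_moment, sub_zero, one_smul]
  all_goals exact Continuous.intervalIntegrable (by fun_prop) 0 1

lemma sum_smul_correlation_edgeVector (d : Γ → ℝ) (r : Γ) :
    ∑ g, ((d (g * r) - d g) / 2) •
        (correlation d (edgeVector g r) + correlation (edgeVector g r) d) =
      -edgeLaplacian r (correlation d d) := by
  ext w
  have even (v : Γ) : correlation d d v⁻¹ = correlation d d v := correlation_inv d d v
  have expand (v : Γ) : ∑ g, (d (g * r) - d g) * (d (g * v) - d (g * (r * v))) =
      correlation d d (r⁻¹ * v) + correlation d d (r * v) - 2 * correlation d d v := by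
    have sum_left (b : Γ) : ∑ g, d g * d (g * b) = correlation d d b := rfl
    simp only [sub_mul, mul_sub, Finset.sum_sub_distrib, sum_mul_comp_mul_right, sum_left,
      inv_mul_cancel_left]
    ring
  have even_left : correlation d d (r⁻¹ * w⁻¹) = correlation d d (w * r) := by
    rw [← mul_inv_rev, even]
  have even_right : correlation d d (r * w⁻¹) = correlation d d (w * r⁻¹) := by
    rw [← even, mul_inv_rev, inv_inv]
  simp only [Finset.sum_apply, Pi.smul_apply, Pi.add_apply, Pi.neg_apply, smul_eq_mul,
    correlation_edgeVector, edgeVector_correlation, edgeLaplacian_apply, div_mul_eq_mul_div,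
    mul_add, ← Finset.sum_div, Finset.sum_add_distrib, expand, even_left, even_right, even]
  ring

lemma sum_integral_correlation_gibbsStepG_self (d : Γ → ℝ) {r : Γ} (hr : r ≠ 1) :
    ∑ g, ∫ l in (0 : ℝ)..1, correlation (gibbsStepG Γ d (g, r, l)) (gibbsStepG Γ d (g, r, l)) =
      (Fintype.card Γ : ℝ) • correlation d d -
        pairLaplacian r (corrDensity (correlation d d)) := by
  have even : correlation d d r⁻¹ = correlation d d r := correlation_inv d d r
  have second_moment : ∑ g, (d g ^ 2 - d g * d (g * r) + d (g * r) ^ 2) / 3 =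
      (2 * correlation d d 1 - correlation d d r) / 3 := by
    rw [← Finset.sum_div, Finset.sum_add_distrib, Finset.sum_sub_distrib,
      sum_comp_mul_right r fun g => d g ^ 2, correlation_self_one, correlation_apply]
    ring
  simp only [integral_correlation_gibbsStepG_self d _ hr, Finset.sum_add_distrib,
    Finset.sum_const, Finset.card_univ, ← Nat.cast_smul_eq_nsmul ℝ, ← Finset.sum_smul,
    sum_smul_correlation_edgeVector, second_moment, pairLaplacian_corrDensity hr, even]
  module

end GibbsStep

section RandomIteration

variable {E Ω : Type*} [MeasurableSpace E] [MeasurableSpace Ω] {step : E → Ω → E}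

lemma measurable_foldl_ofFn (hstep : Measurable fun p : E × Ω => step p.1 p.2) (t : ℕ) :
    Measurable fun p : E × (Fin t → Ω) => (List.ofFn p.2).foldl step p.1 := by
  induction t with
  | zero => simpa only [List.ofFn_zero, List.foldl_nil] using measurable_fst
  | succ t ih =>
    simp only [List.ofFn_succ, List.foldl_cons]
    have first_step : Measurable fun p : E × (Fin (t + 1) → Ω) => step p.1 (p.2 0) :=
      hstep.comp (f := fun p : E × (Fin (t + 1) → Ω) => (p.1, p.2 0)) (by fun_prop)
    exact ih.comp (first_step.prodMk (g := fun p i => p.2 i.succ) (by fun_prop))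

lemma lintegral_pi_foldl_succ (hstep : Measurable fun p : E × Ω => step p.1 p.2)
    {f : E → ENNReal} (hf : Measurable f) (μ : Measure Ω) [SigmaFinite μ] (x : E) (t : ℕ) :
    ∫⁻ ω : Fin (t + 1) → Ω, f ((List.ofFn ω).foldl step x) ∂(Measure.pi fun _ => μ) =
      ∫⁻ u, ∫⁻ ω : Fin t → Ω, f ((List.ofFn ω).foldl step (step x u))
        ∂(Measure.pi fun _ => μ) ∂μ := by
  have measurable_first : Measurable fun p : Ω × (Fin t → Ω) => step x p.1 :=
    hstep.comp (f := fun p : Ω × (Fin t → Ω) => (x, p.1)) (by fun_prop)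
  have measurable_fold : Measurable fun p : Ω × (Fin t → Ω) =>
      f ((List.ofFn p.2).foldl step (step x p.1)) :=
    hf.comp ((measurable_foldl_ofFn hstep t).comp (measurable_first.prodMk measurable_snd))
  have split := (measurePreserving_piFinSuccAbove (fun _ : Fin (t + 1) => μ) 0).symm
  rw [← split.lintegral_comp_emb (MeasurableEquiv.measurableEmbedding _)]
  simp only [MeasurableEquiv.piFinSuccAbove_symm_apply, Fin.insertNthEquiv, Fin.insertNth_zero,
    Equiv.coe_fn_mk, List.ofFn_succ, Fin.cons_succ, Fin.zero_succAbove, cast_eq, Fin.cons_zero,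
    List.foldl_cons]
  exact lintegral_prod _ measurable_fold.aemeasurable

end RandomIteration

section Drive

variable {Γ : Type*} [MeasurableSpace Γ]

lemma isFiniteMeasure_unifOn {s : Finset Γ} (hs : s.Nonempty) : IsFiniteMeasure (unifOn s) :=
  Measure.smul_finite _ (ENNReal.inv_ne_top.2 (Nat.cast_ne_zero.2 hs.card_ne_zero))

lemma isFiniteMeasure_driveG [Fintype Γ] [Nonempty Γ] {R : Finset Γ} (hne : R.Nonempty) :
    IsFiniteMeasure (driveG Γ R) := by
  have := isFiniteMeasure_unifOn hne
  have := isFiniteMeasure_unifOn (Finset.univ_nonempty (α := Γ))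
  unfold driveG
  infer_instance

variable [MeasurableSingletonClass Γ]

lemma measurableEmbedding_prodMk_prodMk (g r : Γ) :
    MeasurableEmbedding fun l : ℝ => (g, r, l) :=
  (measurableEmbedding_prodMk_left g).comp (measurableEmbedding_prodMk_left r)

lemma lintegral_unifOn (s : Finset Γ) (f : Γ → ENNReal) :
    ∫⁻ a, f a ∂(unifOn s) = (s.card : ENNReal)⁻¹ * ∑ a ∈ s, f a := by
  simp only [unifOn, lintegral_smul_measure, lintegral_finsetSum_measure, lintegral_dirac,
    smul_eq_mul]

variable {E : Type*} [NormedAddCommGroup E] {f : Γ × Γ × ℝ → E}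

lemma integrable_map_prodMk_prodMk (hf : ∀ g r, Continuous fun l => f (g, r, l)) (g r : Γ) :
    Integrable f
      (Measure.map (fun l : ℝ => (g, r, l)) (volume.restrict (Set.Icc 0 1))) :=
  (measurableEmbedding_prodMk_prodMk g r).integrable_map_iff.2
    ((hf g r).continuousOn.integrableOn_compact isCompact_Icc)

variable [Fintype Γ] {R : Finset Γ}

lemma driveG_eq_smul_sum_map [Nonempty Γ] (hne : R.Nonempty) :
    driveG Γ R = ((Fintype.card Γ : ENNReal)⁻¹ * (R.card : ENNReal)⁻¹) • ∑ g, ∑ r ∈ R,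
      Measure.map (fun l : ℝ => (g, r, l)) (volume.restrict (Set.Icc 0 1)) := by
  have := isFiniteMeasure_unifOn hne
  have := isFiniteMeasure_unifOn (Finset.univ_nonempty (α := Γ))
  refine Measure.ext_of_lintegral _ fun f hf => ?_
  rw [driveG, lintegral_prod _ hf.aemeasurable, lintegral_unifOn, lintegral_smul_measure,
    lintegral_finsetSum_measure, Finset.card_univ, smul_eq_mul, mul_assoc,
    Finset.mul_sum _ _ (R.card : ENNReal)⁻¹]
  congr 1
  refine Finset.sum_congr rfl fun g _ => ?_
  rw [lintegral_prod (fun p => f (g, p)) (by fun_prop), lintegral_unifOn,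
    lintegral_finsetSum_measure]
  congr 1
  refine Finset.sum_congr rfl fun r _ => ?_
  exact (lintegral_map hf (by fun_prop)).symm

lemma integrable_driveG [Nonempty Γ] (hne : R.Nonempty)
    (hf : ∀ g r, Continuous fun l => f (g, r, l)) : Integrable f (driveG Γ R) := by
  rw [driveG_eq_smul_sum_map hne]
  refine Integrable.smul_measure ?_ (ENNReal.mul_ne_top ?_ ?_)
  · simp only [integrable_finsetSum_measure]
    exact fun g _ r _ => integrable_map_prodMk_prodMk hf g r
  · exact ENNReal.inv_ne_top.2 (Nat.cast_ne_zero.2 Fintype.card_ne_zero)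
  · exact ENNReal.inv_ne_top.2 (Nat.cast_ne_zero.2 hne.card_ne_zero)

lemma integral_driveG [NormedSpace ℝ E] [Nonempty Γ] (hne : R.Nonempty)
    (hf : ∀ g r, Continuous fun l => f (g, r, l)) :
    ∫ u, f u ∂(driveG Γ R) = ((Fintype.card Γ : ℝ) * R.card)⁻¹ •
      ∑ g, ∑ r ∈ R, ∫ l in (0 : ℝ)..1, f (g, r, l) := by
  rw [driveG_eq_smul_sum_map hne, integral_smul_measure, integral_finsetSum_measure fun g _ =>
    integrable_finsetSum_measure.2 fun r _ => integrable_map_prodMk_prodMk hf g r]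
  congr 1
  · simp only [ENNReal.toReal_mul, ENNReal.toReal_inv, ENNReal.toReal_natCast, mul_inv]
  refine Finset.sum_congr rfl fun g _ => ?_
  rw [integral_finsetSum_measure fun r _ => integrable_map_prodMk_prodMk hf g r]
  refine Finset.sum_congr rfl fun r _ => ?_
  rw [(measurableEmbedding_prodMk_prodMk g r).integral_map, integral_Icc_eq_integral_Ioc,
    intervalIntegral.integral_of_le zero_le_one]

end Drive

section Expectation

variable {Γ : Type*} [Group Γ] [Fintype Γ] [DecidableEq Γ] [MeasurableSpace Γ]
  [MeasurableSingletonClass Γ] {R : Finset Γ}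

lemma integral_driveG_correlation_gibbsStepG_self (hid : (1 : Γ) ∉ R) (hne : R.Nonempty)
    (d : Γ → ℝ) :
    ∫ u, correlation (gibbsStepG Γ d u) (gibbsStepG Γ d u) ∂(driveG Γ R) =
      corrStep R (correlation d d) := by
  have hn : (Fintype.card Γ : ℝ) ≠ 0 := Nat.cast_ne_zero.2 Fintype.card_ne_zero
  have hm : (R.card : ℝ) ≠ 0 := Nat.cast_ne_zero.2 hne.card_ne_zero
  rw [integral_driveG hne (continuous_correlation_gibbsStepG_self d), Finset.sum_comm,
    Finset.sum_congr rfl fun r hr =>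
      sum_integral_correlation_gibbsStepG_self d (ne_of_mem_of_not_mem hr hid),
    Finset.sum_sub_distrib, Finset.sum_const, corrStep_apply, meanPairLaplacian_apply, smul_sub,
    ← Nat.cast_smul_eq_nsmul ℝ, smul_smul, smul_smul, mul_assoc, mul_comm (R.card : ℝ),
    inv_mul_cancel₀ (mul_ne_zero hn hm), one_smul]

lemma integral_driveG_linear_correlation (hid : (1 : Γ) ∉ R) (hne : R.Nonempty)
    (L : (Γ → ℝ) →ₗ[ℝ] ℝ) (d : Γ → ℝ) :
    ∫ u, L (correlation (gibbsStepG Γ d u) (gibbsStepG Γ d u)) ∂(driveG Γ R) =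
      L (corrStep R (correlation d d)) := by
  rw [← integral_driveG_correlation_gibbsStepG_self hid hne]
  exact L.toContinuousLinearMap.integral_comp_comm
    (integrable_driveG hne (continuous_correlation_gibbsStepG_self d))

lemma corrStep_pow_correlation_self_one_nonneg (hid : (1 : Γ) ∉ R) (hne : R.Nonempty) (t : ℕ)
    (d : Γ → ℝ) : 0 ≤ (corrStep R ^ t) (correlation d d) 1 := by
  induction t generalizing d with
  | zero =>
    rw [pow_zero, Module.End.one_apply, correlation_self_one]
    positivity
  | succ t ih =>
    have expectation := integral_driveG_linear_correlation hid hne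
      (LinearMap.proj 1 ∘ₗ corrStep R ^ t) d
    rw [pow_succ, Module.End.mul_apply]
    exact (integral_nonneg fun u => ih (gibbsStepG Γ d u)).trans_eq expectation

lemma lintegral_sum_foldl_gibbsStepG_sq (hid : (1 : Γ) ∉ R) (hne : R.Nonempty) (t : ℕ)
    (d : Γ → ℝ) :
    ∫⁻ ω : Fin t → Γ × Γ × ℝ,
        ENNReal.ofReal (∑ g, (List.ofFn ω).foldl (gibbsStepG Γ) d g ^ 2)
        ∂(Measure.pi fun _ => driveG Γ R) =
      ENNReal.ofReal ((corrStep R ^ t) (correlation d d) 1) := by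
  have := isFiniteMeasure_driveG hne
  induction t generalizing d with
  | zero => simp [correlation_self_one]
  | succ t ih =>
    have measurable_norm : Measurable fun e : Γ → ℝ => ENNReal.ofReal (∑ g, e g ^ 2) := by
      fun_prop
    have expectation := integral_driveG_linear_correlation hid hne
      (LinearMap.proj 1 ∘ₗ corrStep R ^ t) d
    have integrable : Integrable (fun u => (LinearMap.proj 1 ∘ₗ corrStep R ^ t)
        (correlation (gibbsStepG Γ d u) (gibbsStepG Γ d u))) (driveG Γ R) :=
      integrable_driveG hne fun g r => (LinearMap.continuous_of_finiteDimensional _).comp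
        (continuous_correlation_gibbsStepG_self d g r)
    rw [lintegral_pi_foldl_succ measurable_gibbsStepG measurable_norm]
    simp only [ih]
    rw [pow_succ, Module.End.mul_apply]
    refine (ofReal_integral_eq_lintegral_ofReal integrable (.of_forall fun u =>
      corrStep_pow_correlation_self_one_nonneg hid hne t (gibbsStepG Γ d u))).symm.trans ?_
    exact congrArg ENNReal.ofReal expectation

end Expectation

theorem gibbs_sampler_cayley_contraction_general (R : Finset G) (hid : (1 : G) ∉ R)
    (hne : R.Nonempty) (x y : G → ℝ) (hxy : ∑ g, x g = ∑ g, y g) (t : ℕ) :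
    ∫⁻ ω : Fin t → G × G × ℝ,
        ENNReal.ofReal (∑ g : G,
          ((List.ofFn ω).foldl (gibbsStepG G) x g - (List.ofFn ω).foldl (gibbsStepG G) y g) ^ 2)
        ∂(Measure.pi fun _ => driveG G R) ≤
      ENNReal.ofReal (√(2 * Fintype.card G) * Real.exp (-(t * gapHat G R / 3)) *
        ∑ g, (x g - y g) ^ 2) := by
  have sum_zero : ∑ w, correlation (x - y) (x - y) w = 0 := by
    simp only [sum_correlation, Pi.sub_apply, Finset.sum_sub_distrib, hxy, sub_self, mul_zero]
  have fold_sub (ω : Fin t → G × G × ℝ) (g : G) :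
      (List.ofFn ω).foldl (gibbsStepG G) x g - (List.ofFn ω).foldl (gibbsStepG G) y g =
        (List.ofFn ω).foldl (gibbsStepG G) (x - y) g := by
    rw [foldl_gibbsStepG_sub, Pi.sub_apply]
  simp only [fold_sub]
  rw [lintegral_sum_foldl_gibbsStepG_sq hid hne]
  refine ENNReal.ofReal_le_ofReal ?_
  calc (corrStep R ^ t) (correlation (x - y) (x - y)) 1
      ≤ Real.exp (-(t * gapHat G R / 3)) * √(2 * ∑ w, correlation (x - y) (x - y) w ^ 2) :=
        corrStep_pow_apply_one_le hid hne sum_zero t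
    _ ≤ Real.exp (-(t * gapHat G R / 3)) *
          √(2 * ∑ _w : G, (∑ g, (x - y) g ^ 2) ^ 2) := by
        gcongr _ * √(2 * ∑ w, ?_)
        exact correlation_self_sq_le (x - y) w
    _ = √(2 * Fintype.card G) * Real.exp (-(t * gapHat G R / 3)) * ∑ g, (x g - y g) ^ 2 := by
        simp only [Pi.sub_apply]
        rw [Finset.sum_const, Finset.card_univ, nsmul_eq_mul, ← mul_assoc,
          Real.sqrt_mul (by positivity), Real.sqrt_sq (by positivity)]
        ring

section Simplex

variable {Γ : Type*} [Fintype Γ]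

lemma sum_sq_le_one_of_mem_simplexG {x : Γ → ℝ} (hx : x ∈ simplexG Γ) : ∑ g, x g ^ 2 ≤ 1 := by
  rw [← hx.2]
  refine Finset.sum_le_sum fun g _ => pow_le_of_le_one (hx.1 g) ?_ two_ne_zero
  rw [← hx.2]
  exact Finset.single_le_sum (fun i _ => hx.1 i) (Finset.mem_univ g)

lemma sum_sub_sq_le_two_of_mem_simplexG {x y : Γ → ℝ} (hx : x ∈ simplexG Γ)
    (hy : y ∈ simplexG Γ) : ∑ g, (x g - y g) ^ 2 ≤ 2 := by
  calc ∑ g, (x g - y g) ^ 2 ≤ ∑ g, (x g ^ 2 + y g ^ 2) := by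
        gcongr with g
        linarith [sub_sq (x g) (y g), mul_nonneg (hx.1 g) (hy.1 g)]
    _ ≤ 2 := by
        rw [Finset.sum_add_distrib]
        linarith [sum_sq_le_one_of_mem_simplexG hx, sum_sq_le_one_of_mem_simplexG hy]

lemma sqrt_mul_exp_mul_sum_sub_sq_le [Nonempty Γ] {x y : Γ → ℝ} (hx : x ∈ simplexG Γ)
    (hy : y ∈ simplexG Γ) {a : ℝ} (ha : 0 ≤ a) :
    √(2 * Fintype.card Γ) * Real.exp (-(a / 3)) * ∑ g, (x g - y g) ^ 2 ≤
      4 * Fintype.card Γ * Real.exp (-(⌊a / 8⌋ : ℝ)) := by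
  have one_le : (1 : ℝ) ≤ Fintype.card Γ := Nat.one_le_cast.2 Fintype.card_pos
  have sqrt_le : √(2 * Fintype.card Γ : ℝ) ≤ 2 * Fintype.card Γ :=
    Real.sqrt_le_self_iff.2 (.inr (by linarith))
  have floor_le : (⌊a / 8⌋ : ℝ) ≤ a / 3 := by linarith [Int.floor_le (a / 8)]
  calc √(2 * Fintype.card Γ) * Real.exp (-(a / 3)) * ∑ g, (x g - y g) ^ 2
      ≤ 2 * Fintype.card Γ * Real.exp (-(⌊a / 8⌋ : ℝ)) * 2 := by
        gcongr
        exact sum_sub_sq_le_two_of_mem_simplexG hx hy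
    _ = 4 * Fintype.card Γ * Real.exp (-(⌊a / 8⌋ : ℝ)) := by ring

end Simplex

/-- Contraction estimate for the proportionally coupled Gibbs samplers on the simplex
associated with a Cayley graph: `E[‖X_t - Y_t‖₂²] ≤ 4 n e^{-⌊t γ̂ / 8⌋}`. -/
theorem gibbs_sampler_cayley_contraction
    (R : Finset G) (hsym : ∀ r ∈ R, r⁻¹ ∈ R) (hid : (1 : G) ∉ R) (hne : R.Nonempty)
    (hgen : Subgroup.closure (R : Set G) = ⊤)
    (x y : G → ℝ) (hx : x ∈ simplexG G) (hy : y ∈ simplexG G) (t : ℕ) :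
    ∫⁻ ω : Fin t → G × G × ℝ,
        ENNReal.ofReal (∑ g : G,
          ((List.ofFn ω).foldl (gibbsStepG G) x g - (List.ofFn ω).foldl (gibbsStepG G) y g) ^ 2)
        ∂(Measure.pi fun _ => driveG G R) ≤
      ENNReal.ofReal (4 * (Fintype.card G : ℝ) *
        Real.exp (-((⌊(t : ℝ) * gapHat G R / 8⌋ : ℤ) : ℝ))) :=
  (gibbs_sampler_cayley_contraction_general G R hid hne x y (hx.2.trans hy.2.symm) t).trans <|
    ENNReal.ofReal_le_ofReal <| sqrt_mul_exp_mul_sum_sub_sq_le hx hy <|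
      mul_nonneg t.cast_nonneg (gapHat_nonneg hid hne)

end
end

section
/- Assume n ≥ 6 and fix real numbers b, f with 0 ≤ b ≤ f − 1. Let x, y ∈ Δ_n satisfy max_i |x_i − y_i| ≤ n^{−f} and min_i x_i ≥ n^{−b}, min_i y_i ≥ n^{−b}. Fix a subset S ⊂ {1,…,n} and indices i ∈ S, j ∉ S. Then there exists a coupling (λ_x, λ_y) of two uniform random variables on [0,1] (i.e. a probability measure on [0,1]² with both coordinate marginals equal to Lebesgue measure on [0,1]) such that, letting x' be x updated at (i,j) with λ_x (x'_i = λ_x(x_i + x_j), x'_j = (1−λ_x)(x_i + x_j), all other coordinates unchanged) and y' be y updated at (i,j) with λ_y, we have P[∑_{s∈S} x'_s = ∑_{s∈S} y'_s] ≥ 1 − 3·n^{b+1−f}. -/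
open MeasureTheory

noncomputable section

/-- The standard simplex in `ℝ^n`. -/
def simplexS (n : ℕ) : Set (Fin n → ℝ) :=
  {x | (∀ i, 0 ≤ x i) ∧ ∑ i, x i = 1}

/-- The Gibbs-sampler update of `x` at the pair `(i, j)` with parameter `l`:
entry `i` becomes `l (x_i + x_j)` and entry `j` becomes `(1 - l)(x_i + x_j)`. -/
def stepS (n : ℕ) (x : Fin n → ℝ) (i j : Fin n) (l : ℝ) : Fin n → ℝ :=
  Function.update (Function.update x i (l * (x i + x j))) j ((1 - l) * (x i + x j))

/-!
With `A`, `B` the `x`- and `y`-weights of `S \ {i}`, the updated weights of `S` are uniform on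
`[A, A + x i + x j]` and `[B, B + y i + y j]`. Since the totals agree, the right endpoints differ
by as much as the weights of `Sᶜ \ {j}` do, so the two endpoints together are displaced by at most
`∑ s ∉ {i, j}, |x s - y s|`. The two uniform laws share the component
`(max of the lengths)⁻¹ • volume` on the intersection of the intervals. Coupling that component
along the diagonal and the two remainders independently makes the weights agree off a set of mass
at most (displacement of the endpoints) / (length).
-/

section Coupling

variable {α β γ : Type*} [MeasurableSpace α] [MeasurableSpace β] [MeasurableSpace γ]

/-- `μ` is a coupling of `P` and `Q`: its marginals are `P` and `Q`. The measures need not be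
probability measures, so that couplings can be assembled from pieces by addition. -/
structure IsCoupling (μ : Measure (α × β)) (P : Measure α) (Q : Measure β) : Prop where
  fst_eq : μ.fst = P
  snd_eq : μ.snd = Q

lemma IsCoupling.isProbabilityMeasure {μ : Measure (α × β)} {P : Measure α} {Q : Measure β}
    [hP : IsProbabilityMeasure P] (h : IsCoupling μ P Q) : IsProbabilityMeasure μ := by
  rw [← h.fst_eq, Measure.fst] at hP
  exact Measure.isProbabilityMeasure_of_map Prod.fst

lemma IsCoupling.add {μ₁ μ₂ : Measure (α × β)} {P₁ P₂ : Measure α} {Q₁ Q₂ : Measure β}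
    (h₁ : IsCoupling μ₁ P₁ Q₁) (h₂ : IsCoupling μ₂ P₂ Q₂) :
    IsCoupling (μ₁ + μ₂) (P₁ + P₂) (Q₁ + Q₂) where
  fst_eq := by rw [Measure.fst_add, h₁.fst_eq, h₂.fst_eq]
  snd_eq := by rw [Measure.snd_add, h₁.snd_eq, h₂.snd_eq]

lemma inv_measure_univ_smul_measure_univ_smul (P : Measure α) [IsFiniteMeasure P] :
    (P Set.univ)⁻¹ • P Set.univ • P = P := by
  rcases eq_or_ne P 0 with rfl | hP
  · simp only [smul_zero]
  · rw [smul_smul, ENNReal.inv_mul_cancel (Measure.measure_univ_ne_zero.2 hP)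
      (measure_ne_top P _), one_smul]

lemma isCoupling_inv_smul_prod {P : Measure α} {Q : Measure β} [IsFiniteMeasure P]
    [IsFiniteMeasure Q] (h : P Set.univ = Q Set.univ) :
    IsCoupling ((P Set.univ)⁻¹ • P.prod Q) P Q where
  fst_eq := by
    rw [Measure.fst, Measure.map_smul, Measure.map_fst_prod, ← h,
      inv_measure_univ_smul_measure_univ_smul]
  snd_eq := by
    rw [Measure.snd, Measure.map_smul, Measure.map_snd_prod, h,
      inv_measure_univ_smul_measure_univ_smul]

lemma exists_isCoupling_ge {P : Measure α} {Q : Measure β} [IsFiniteMeasure P]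
    [IsFiniteMeasure Q] (h : P Set.univ = Q Set.univ) {ν : Measure (α × β)}
    (hP : ν.fst ≤ P) (hQ : ν.snd ≤ Q) : ∃ μ, IsCoupling μ P Q ∧ ν ≤ μ := by
  have : IsFiniteMeasure ν.fst := isFiniteMeasure_of_le P hP
  have : IsFiniteMeasure ν.snd := isFiniteMeasure_of_le Q hQ
  have hmass : (P - ν.fst) Set.univ = (Q - ν.snd) Set.univ := by
    rw [Measure.sub_apply .univ hP, Measure.sub_apply .univ hQ, Measure.fst_univ,
      Measure.snd_univ, h]
  have hcoupling := (isCoupling_inv_smul_prod hmass).add (μ₂ := ν) ⟨rfl, rfl⟩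
  rw [Measure.sub_add_cancel_of_le hP, Measure.sub_add_cancel_of_le hQ] at hcoupling
  exact ⟨_, hcoupling, Measure.le_add_left le_rfl⟩

lemma exists_isCoupling_measure_eq_ge {P : Measure α} {Q : Measure β} [IsFiniteMeasure P]
    [IsFiniteMeasure Q] (h : P Set.univ = Q Set.univ) (κ : Measure γ) {f : α → γ} {g : β → γ}
    {s : γ → α} {t : γ → β} (hs : Measurable s) (ht : Measurable t)
    (hfs : Function.RightInverse s f) (hgt : Function.RightInverse t g)
    (hP : κ.map s ≤ P) (hQ : κ.map t ≤ Q) :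
    ∃ μ, IsCoupling μ P Q ∧ κ Set.univ ≤ μ {l | f l.1 = g l.2} := by
  obtain ⟨μ, hμ, hle⟩ := exists_isCoupling_ge (ν := κ.map fun z ↦ (s z, t z)) h
    (by rwa [Measure.fst_map_prodMk ht]) (by rwa [Measure.snd_map_prodMk hs])
  have hagree : (fun z ↦ (s z, t z)) ⁻¹' {l | f l.1 = g l.2} = Set.univ :=
    Set.eq_univ_of_forall fun z ↦ (hfs z).trans (hgt z).symm
  refine ⟨μ, hμ, ?_⟩
  calc κ Set.univ = κ ((fun z ↦ (s z, t z)) ⁻¹' {l | f l.1 = g l.2}) := by rw [hagree]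
    _ ≤ κ.map (fun z ↦ (s z, t z)) {l | f l.1 = g l.2} :=
      Measure.le_map_apply (hs.prodMk ht).aemeasurable _
    _ ≤ μ {l | f l.1 = g l.2} := hle _

end Coupling

section UniformInterval

/-- The uniform distribution on `[0, 1]`, the law of the update parameters. -/
abbrev uniformUnitInterval : Measure ℝ := volume.restrict (Set.Icc 0 1)

instance : IsProbabilityMeasure uniformUnitInterval := ⟨by simp⟩

lemma map_rescale_restrict_Icc (a : ℝ) {p : ℝ} (hp : 0 < p) :
    ((volume : Measure ℝ).restrict (Set.Icc a (a + p))).map (fun z ↦ p⁻¹ * (z - a)) =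
      ENNReal.ofReal p • uniformUnitInterval := by
  have hpreimage : (fun z ↦ p⁻¹ * (z - a)) ⁻¹' Set.Icc 0 1 = Set.Icc a (a + p) := by
    ext z
    simp only [Set.mem_preimage, Set.mem_Icc, le_inv_mul_iff₀ hp, inv_mul_le_iff₀ hp]
    constructor <;> rintro ⟨h₀, h₁⟩ <;> constructor <;> linarith
  have hmap : (volume : Measure ℝ).map (fun z ↦ p⁻¹ * (z - a)) = ENNReal.ofReal p • volume := by
    rw [← Function.comp_def (p⁻¹ * ·) (· - a), ← Measure.map_map (by fun_prop) (by fun_prop),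
      map_sub_right_eq_self, Real.map_volume_mul_left (inv_ne_zero hp.ne'), inv_inv,
      abs_of_pos hp]
  rw [← hpreimage, ← Measure.restrict_map (by fun_prop) measurableSet_Icc, hmap,
    Measure.restrict_smul]

lemma map_rescale_smul_restrict_le {a p m : ℝ} (hp : 0 < p) (hpm : p ≤ m) {K : Set ℝ}
    (hK : K ⊆ Set.Icc a (a + p)) :
    (ENNReal.ofReal m⁻¹ • (volume : Measure ℝ).restrict K).map (fun z ↦ p⁻¹ * (z - a)) ≤
      uniformUnitInterval := by
  have hm : 0 < m := hp.trans_le hpm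
  have hscale : ENNReal.ofReal m⁻¹ * ENNReal.ofReal p ≤ 1 := by
    rw [← ENNReal.ofReal_mul (inv_nonneg.2 hm.le), ENNReal.ofReal_le_one, inv_mul_le_iff₀ hm]
    linarith
  calc _ ≤ ENNReal.ofReal m⁻¹ •
        ((volume : Measure ℝ).restrict (Set.Icc a (a + p))).map (fun z ↦ p⁻¹ * (z - a)) := by
        rw [Measure.map_smul]
        have hrescale : Measurable fun z : ℝ ↦ p⁻¹ * (z - a) := by fun_prop
        gcongr
    _ = (ENNReal.ofReal m⁻¹ * ENNReal.ofReal p) • uniformUnitInterval := by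
        rw [map_rescale_restrict_Icc a hp, smul_smul]
    _ ≤ uniformUnitInterval := by
        conv_rhs => rw [← one_smul ENNReal uniformUnitInterval]
        gcongr

lemma exists_isCoupling_affine_eq_of_pos (a c : ℝ) {p q : ℝ} (hp : 0 < p) (hq : 0 < q) :
    ∃ μ, IsCoupling μ uniformUnitInterval uniformUnitInterval ∧
      ENNReal.ofReal ((max p q)⁻¹ * (min (a + p) (c + q) - max a c)) ≤
        μ {l | a + l.1 * p = c + l.2 * q} := by
  obtain ⟨μ, hμ, hle⟩ := exists_isCoupling_measure_eq_ge rfl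
    (ENNReal.ofReal (max p q)⁻¹ •
      (volume : Measure ℝ).restrict (Set.Icc (max a c) (min (a + p) (c + q))))
    (f := fun l ↦ a + l * p) (g := fun l ↦ c + l * q)
    (s := fun z ↦ p⁻¹ * (z - a)) (t := fun z ↦ q⁻¹ * (z - c)) (by fun_prop) (by fun_prop)
    (fun z ↦ by field_simp; ring) (fun z ↦ by field_simp; ring)
    (map_rescale_smul_restrict_le hp (le_max_left p q)
      (Set.Icc_subset_Icc (le_max_left _ _) (min_le_left _ _)))
    (map_rescale_smul_restrict_le hq (le_max_right p q)
      (Set.Icc_subset_Icc (le_max_right _ _) (min_le_right _ _)))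
  refine ⟨μ, hμ, le_of_eq_of_le ?_ hle⟩
  rw [Measure.smul_apply, Measure.restrict_apply_univ, Real.volume_Icc, smul_eq_mul,
    ENNReal.ofReal_mul (by positivity)]

lemma max_sub_sub_le_min_sub_max (a b c d : ℝ) :
    max (b - a) (d - c) - (|a - c| + |b - d|) ≤ min b d - max a c := by
  grind

lemma exists_isCoupling_affine_eq (a c : ℝ) {p : ℝ} (q : ℝ) (hp : 0 < p) :
    ∃ μ, IsCoupling μ uniformUnitInterval uniformUnitInterval ∧
      ENNReal.ofReal (1 - (|a - c| + |a + p - (c + q)|) / p) ≤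
        μ {l | a + l.1 * p = c + l.2 * q} := by
  set δ := |a - c| + |a + p - (c + q)|
  rcases le_or_gt q 0 with hq | hq
  · have hδ : p ≤ δ := by grind
    refine ⟨uniformUnitInterval.prod uniformUnitInterval,
      ⟨Measure.fst_prod, Measure.snd_prod⟩, ?_⟩
    rw [ENNReal.ofReal_of_nonpos (sub_nonpos.2 ((one_le_div hp).2 hδ))]
    exact zero_le
  · obtain ⟨μ, hμ, hle⟩ := exists_isCoupling_affine_eq_of_pos a c hp hq
    refine ⟨μ, hμ, le_trans (ENNReal.ofReal_le_ofReal ?_) hle⟩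
    have hoverlap := max_sub_sub_le_min_sub_max a (a + p) c (c + q)
    rw [add_sub_cancel_left, add_sub_cancel_left] at hoverlap
    calc 1 - δ / p ≤ 1 - δ / max p q := by gcongr; exact le_max_left p q
      _ = (max p q)⁻¹ * (max p q - δ) := by field_simp
      _ ≤ (max p q)⁻¹ * (min (a + p) (c + q) - max a c) := by gcongr

end UniformInterval

section SubsetWeight

lemma sum_stepS {n : ℕ} (x : Fin n → ℝ) {S : Finset (Fin n)} {i j : Fin n} (hiS : i ∈ S)
    (hjS : j ∉ S) (l : ℝ) :
    ∑ s ∈ S, stepS n x i j l s = ∑ s ∈ S.erase i, x s + l * (x i + x j) := by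
  have hij : i ≠ j := ne_of_mem_of_not_mem hiS hjS
  have hi : stepS n x i j l i = l * (x i + x j) := by simp [stepS, hij]
  have hother : ∀ s ∈ S.erase i, stepS n x i j l s = x s := fun s hs ↦ by
    have hsj : s ≠ j := ne_of_mem_of_not_mem (Finset.mem_of_mem_erase hs) hjS
    simp [stepS, hsj, Finset.ne_of_mem_erase hs]
  rw [← Finset.sum_erase_add _ _ hiS, hi, Finset.sum_congr rfl hother]

variable {ι : Type*} [Fintype ι] [DecidableEq ι] {S : Finset ι} {i j : ι}

lemma sum_erase_add_sum_compl_erase (x : ι → ℝ) (hiS : i ∈ S) (hjS : j ∉ S) :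
    ∑ s ∈ S.erase i, x s + ∑ s ∈ Sᶜ.erase j, x s = ∑ s ∈ {i, j}ᶜ, x s := by
  have hdisj : Disjoint (S.erase i) (Sᶜ.erase j) :=
    disjoint_compl_right.mono (Finset.erase_subset _ _) (Finset.erase_subset _ _)
  rw [← Finset.sum_union hdisj]
  congr 1
  grind [Finset.mem_compl]

lemma abs_sum_erase_sub_add_abs_sub_le {x y : ι → ℝ} (hsum : ∑ s, x s = ∑ s, y s)
    (hiS : i ∈ S) (hjS : j ∉ S) :
    |∑ s ∈ S.erase i, x s - ∑ s ∈ S.erase i, y s| +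
        |∑ s ∈ S.erase i, x s + (x i + x j) - (∑ s ∈ S.erase i, y s + (y i + y j))| ≤
      ∑ s ∈ {i, j}ᶜ, |x s - y s| := by
  have habs (T : Finset ι) : |∑ s ∈ T, x s - ∑ s ∈ T, y s| ≤ ∑ s ∈ T, |x s - y s| := by
    rw [← Finset.sum_sub_distrib]
    exact Finset.abs_sum_le_sum_abs _ _
  have htotal (z : ι → ℝ) :
      ∑ s ∈ S.erase i, z s + (z i + z j) = ∑ s, z s - ∑ s ∈ Sᶜ.erase j, z s := by
    have hpair := Finset.sum_pair (f := z) (ne_of_mem_of_not_mem hiS hjS)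
    linarith [sum_erase_add_sum_compl_erase z hiS hjS, Finset.sum_add_sum_compl {i, j} z]
  rw [htotal x, htotal y, hsum, sub_sub_sub_cancel_left, abs_sub_comm (∑ s ∈ Sᶜ.erase j, y s),
    ← sum_erase_add_sum_compl_erase _ hiS hjS]
  exact add_le_add (habs _) (habs _)

end SubsetWeight

lemma exists_isCoupling_sum_stepS_eq {n : ℕ} {x y : Fin n → ℝ} (hsum : ∑ s, x s = ∑ s, y s)
    {S : Finset (Fin n)} {i j : Fin n} (hiS : i ∈ S) (hjS : j ∉ S) (hpos : 0 < x i + x j) :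
    ∃ μ, IsCoupling μ uniformUnitInterval uniformUnitInterval ∧
      ENNReal.ofReal (1 - (∑ s ∈ {i, j}ᶜ, |x s - y s|) / (x i + x j)) ≤
        μ {l | ∑ s ∈ S, stepS n x i j l.1 s = ∑ s ∈ S, stepS n y i j l.2 s} := by
  simp only [sum_stepS _ hiS hjS]
  obtain ⟨μ, hμ, hle⟩ := exists_isCoupling_affine_eq (∑ s ∈ S.erase i, x s)
    (∑ s ∈ S.erase i, y s) (y i + y j) hpos
  refine ⟨μ, hμ, le_trans (ENNReal.ofReal_le_ofReal ?_) hle⟩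
  gcongr
  exact abs_sum_erase_sub_add_abs_sub_le hsum hiS hjS

lemma sum_div_le_half_rpow {ι : Type*} {T : Finset ι} {g : ι → ℝ} {n : ℕ} {b f m : ℝ}
    (hn : 0 < n) (hT : T.card ≤ n) (hg : ∀ s ∈ T, g s ≤ (n : ℝ) ^ (-f))
    (hm : 2 * (n : ℝ) ^ (-b) ≤ m) : (∑ s ∈ T, g s) / m ≤ (n : ℝ) ^ (b + 1 - f) / 2 := by
  have hn' : (0 : ℝ) < n := Nat.cast_pos.2 hn
  calc (∑ s ∈ T, g s) / m ≤ (n * (n : ℝ) ^ (-f)) / (2 * (n : ℝ) ^ (-b)) := by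
        gcongr
        calc ∑ s ∈ T, g s ≤ T.card * (n : ℝ) ^ (-f) := by
              simpa only [nsmul_eq_mul] using Finset.sum_le_card_nsmul T g _ hg
          _ ≤ n * (n : ℝ) ^ (-f) := by gcongr
    _ = (n : ℝ) ^ (b + 1 - f) / 2 := by
        rw [show b + 1 - f = 1 + -f - -b by ring, Real.rpow_sub hn', Real.rpow_add hn',
          Real.rpow_one]
        field_simp

theorem simplex_subset_coupling_general {n : ℕ} {b f : ℝ} {x y : Fin n → ℝ}
    (hsum : ∑ s, x s = ∑ s, y s) (hxy : ∀ s, |x s - y s| ≤ (n : ℝ) ^ (-f))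
    {S : Finset (Fin n)} {i j : Fin n} (hiS : i ∈ S) (hjS : j ∉ S)
    (hlow : 2 * (n : ℝ) ^ (-b) ≤ x i + x j) :
    ∃ μ, IsCoupling μ uniformUnitInterval uniformUnitInterval ∧
      ENNReal.ofReal (1 - (n : ℝ) ^ (b + 1 - f) / 2) ≤
        μ {l | ∑ s ∈ S, stepS n x i j l.1 s = ∑ s ∈ S, stepS n y i j l.2 s} := by
  have hn : (0 : ℝ) < n := Nat.cast_pos.2 i.pos
  obtain ⟨μ, hμ, hle⟩ := exists_isCoupling_sum_stepS_eq hsum hiS hjS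
    (lt_of_lt_of_le (by positivity) hlow)
  exact ⟨μ, hμ, le_trans (ENNReal.ofReal_le_ofReal (sub_le_sub_left
    (sum_div_le_half_rpow i.pos (card_finset_fin_le _) (fun s _ ↦ hxy s) hlow) 1)) hle⟩

/-- Subset-coupling lemma on the simplex: for nearby points bounded away from the boundary,
there is a coupling of the uniform update variables making the weights of `S` agree with
probability at least `1 - 3 n^{b+1-f}`. -/
theorem simplex_subset_coupling
    (n : ℕ) (hn : 6 ≤ n) (b f : ℝ) (hb : 0 ≤ b) (hbf : b ≤ f - 1)
    (x y : Fin n → ℝ) (hx : x ∈ simplexS n) (hy : y ∈ simplexS n)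
    (hxy : ∀ i, |x i - y i| ≤ (n : ℝ) ^ (-f))
    (hxlow : ∀ i, (n : ℝ) ^ (-b) ≤ x i) (hylow : ∀ i, (n : ℝ) ^ (-b) ≤ y i)
    (S : Finset (Fin n)) (i : Fin n) (hiS : i ∈ S) (j : Fin n) (hjS : j ∉ S) :
    ∃ μ : Measure (ℝ × ℝ),
      IsProbabilityMeasure μ ∧
      μ.map Prod.fst = (volume : Measure ℝ).restrict (Set.Icc 0 1) ∧
      μ.map Prod.snd = (volume : Measure ℝ).restrict (Set.Icc 0 1) ∧
      ENNReal.ofReal (1 - 3 * (n : ℝ) ^ (b + 1 - f)) ≤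
        μ {l | ∑ s ∈ S, stepS n x i j l.1 s = ∑ s ∈ S, stepS n y i j l.2 s} := by
  obtain ⟨μ, hμ, hle⟩ := simplex_subset_coupling_general (b := b) (hx.2.trans hy.2.symm) hxy
    hiS hjS (by linarith [hxlow i, hxlow j])
  exact ⟨μ, hμ.isProbabilityMeasure, hμ.fst_eq, hμ.snd_eq, le_trans (ENNReal.ofReal_le_ofReal
    (by linarith [Real.rpow_nonneg n.cast_nonneg (b + 1 - f)])) hle⟩

end
end
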